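/- Let p be a prime, R a δ-ring, A a δ-R-algebra, α, β ∈ A with δ(α)=αβ, ∂ an α-derivation of A over R, and let γ = id_A + α·∂ and φ(y) = y^p + p·δ(y). Say that x ∈ A is δ-compatible (with respect to ∂ and β) if ∂(δ(x)) = (α^{p−1}+p·β)·δ(∂(x)) + β·∂(x)^p − ∑_{ν=1}^{p−1} (1/p)·C(p,ν)·x^{p−ν}·α^{ν−1}·∂(x)^ν. Then: (1) if x is δ-compatible then γ(δ(x)) = δ(γ(x)), and the converse holds if α is a nonzerodivisor of A; (2) if x is δ-compatible then ∂(φ(x)) = (α^{p−1}+p·β)·φ(∂(x)), and the converse holds if A is p-torsion free. -/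

import Mathlib

/-- A δ-structure on a commutative ring `A`, relative to a prime `p`. -/
structure DeltaStructure (p : ℕ) (A : Type*) [CommRing A] where
  δ : A → A
  delta_zero : δ 0 = 0
  delta_one : δ 1 = 0
  delta_add : ∀ x y : A, δ (x + y) =
    δ x + δ y - ∑ i ∈ Finset.Ioo 0 p, ((p.choose i / p : ℕ) : A) * x ^ i * y ^ (p - i)
  delta_mul : ∀ x y : A, δ (x * y) =
    δ x * y ^ p + x ^ p * δ y + (p : A) * δ x * δ y

/-- An `α`-derivation of a commutative `R`-algebra `A` over `R`. -/
structure AlphaDerivation (R A : Type*) [CommRing R] [CommRing A] [Algebra R A]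
    (α : A) where
  toFun : A → A
  map_add' : ∀ x y : A, toFun (x + y) = toFun x + toFun y
  map_smul' : ∀ (r : R) (x : A), toFun (r • x) = r • toFun x
  map_one' : toFun 1 = 0
  leibniz' : ∀ x y : A, toFun (x * y) =
    toFun x * y + x * toFun y + α * (toFun x * toFun y)

/-- `x` is δ-compatible with respect to the map `D` (an `α`-derivation) and `β`. -/
def DeltaCompatAt (p : ℕ) {A : Type*} [CommRing A] (DA : DeltaStructure p A)
    (α β : A) (D : A → A) (x : A) : Prop :=
  D (DA.δ x) = (α ^ (p - 1) + (p : A) * β) * DA.δ (D x) + β * (D x) ^ p -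
    ∑ ν ∈ Finset.Ioo 0 p,
      ((p.choose ν / p : ℕ) : A) * x ^ (p - ν) * α ^ (ν - 1) * (D x) ^ ν

/-!
Failure of δ-compatibility at `x` is measured by a single element, the defect `e`, which is the
difference of the two sides of its defining equation. Both commutation properties differ from
equality by a multiple of it:
`γ(δ(x)) - δ(γ(x)) = α * e` and `∂(φ(x)) - (α^(p-1) + pβ) * φ(∂(x)) = p * e`.

The reason is that the right-hand side of the compatibility condition is the difference quotient
`(δ(x + α * d) - δ(x)) / α` at `d = ∂(x)`, computed without dividing, while `∂(x^p)` is the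
difference quotient `((x + α * d)^p - x^p) / α`. All terms of the latter but the last are divisible
by `p`, and dividing them by `p` gives the sum in the compatibility condition.
-/

section DifferenceQuotient

variable {A : Type*} [CommSemiring A]

/-- The difference quotient `((x + α * d) ^ n - x ^ n) / α`, expanded by the binomial theorem so
that no division by `α` is needed. It gives the value of an `α`-derivation at a power of `x`. -/
def powDiffQuot (n : ℕ) (α x d : A) : A :=
  ∑ k ∈ Finset.range n, (n.choose (k + 1) : A) * x ^ (n - (k + 1)) * α ^ k * d ^ (k + 1)

/-- The sum in the definition of δ-compatibility, with an arbitrary element `d` in place of `∂(x)`: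
for `p` prime, it is `1 / p` times the sum of all terms but the last of `powDiffQuot p α x d`. -/
def crossTerm (p : ℕ) (α x d : A) : A :=
  ∑ ν ∈ Finset.Ioo 0 p, ((p.choose ν / p : ℕ) : A) * x ^ (p - ν) * α ^ (ν - 1) * d ^ ν

theorem powDiffQuot_succ (n : ℕ) (α x d : A) :
    powDiffQuot (n + 1) α x d = (x + α * d) * powDiffQuot n α x d + x ^ n * d := by
  have pascal : powDiffQuot (n + 1) α x d =
      (∑ k ∈ Finset.range (n + 1), (n.choose k : A) * x ^ (n - k) * α ^ k * d ^ (k + 1)) +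
        ∑ k ∈ Finset.range (n + 1), (n.choose (k + 1) : A) * x ^ (n - k) * α ^ k * d ^ (k + 1) := by
    rw [powDiffQuot, ← Finset.sum_add_distrib]
    refine Finset.sum_congr rfl fun k _ => ?_
    rw [Nat.choose_succ_succ, Nat.add_sub_add_right]
    push_cast
    ring
  have lower : ∑ k ∈ Finset.range (n + 1), (n.choose k : A) * x ^ (n - k) * α ^ k * d ^ (k + 1) =
      α * d * powDiffQuot n α x d + x ^ n * d := by
    rw [Finset.sum_range_succ', powDiffQuot, Finset.mul_sum]
    congr 1
    · exact Finset.sum_congr rfl fun k _ => by ring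
    · simp
  have upper : ∑ k ∈ Finset.range (n + 1),
      (n.choose (k + 1) : A) * x ^ (n - k) * α ^ k * d ^ (k + 1) = x * powDiffQuot n α x d := by
    rw [Finset.sum_range_succ, powDiffQuot, Finset.mul_sum, Nat.choose_succ_self]
    simp only [Nat.cast_zero, zero_mul, add_zero]
    refine Finset.sum_congr rfl fun k hk => ?_
    rw [show n - k = n - (k + 1) + 1 by have := Finset.mem_range.1 hk; omega]
    ring
  rw [pascal, lower, upper]
  ring

theorem powDiffQuot_prime {p : ℕ} (hp : p.Prime) (α x d : A) :
    powDiffQuot p α x d = α ^ (p - 1) * d ^ p + (p : A) * crossTerm p α x d := by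
  obtain ⟨q, rfl⟩ : ∃ q, p = q + 1 := Nat.exists_eq_succ_of_ne_zero hp.ne_zero
  have hIoo : Finset.Ioo 0 (q + 1) = Finset.Ico (0 + 1) (q + 1) := by ext; simp; omega
  rw [powDiffQuot, crossTerm, Finset.sum_range_succ, add_comm, hIoo, ← Finset.sum_Ico_add',
    ← Finset.range_eq_Ico, Finset.mul_sum]
  congr 1
  · simp
  · refine Finset.sum_congr rfl fun k hk => ?_
    have hdvd : q + 1 ∣ (q + 1).choose (k + 1) :=
      hp.dvd_choose_self k.succ_ne_zero (Nat.succ_lt_succ (Finset.mem_range.1 hk))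
    rw [← Nat.mul_div_cancel' hdvd, Nat.mul_div_cancel_left _ q.succ_pos, Nat.add_sub_cancel]
    push_cast
    ring

theorem sum_choose_div_mul_pow_eq_mul_crossTerm (p : ℕ) (α x d : A) :
    ∑ i ∈ Finset.Ioo 0 p, ((p.choose i / p : ℕ) : A) * x ^ i * (α * d) ^ (p - i) =
      α * crossTerm p α x d := by
  rw [crossTerm, Finset.mul_sum]
  refine Finset.sum_nbij' (p - ·) (p - ·) ?_ ?_ ?_ ?_ fun i hi => ?_
  iterate 4 simp only [Finset.mem_Ioo]; omega
  have hi_lt : i < p := (Finset.mem_Ioo.1 hi).2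
  have hα : α ^ (p - i) = α * α ^ (p - i - 1) := (mul_pow_sub_one (by omega) α).symm
  rw [Nat.choose_symm hi_lt.le, Nat.sub_sub_self hi_lt.le, mul_pow, hα]
  ring

end DifferenceQuotient

namespace DeltaStructure

variable {p : ℕ} {A : Type*} [CommRing A] (DA : DeltaStructure p A)

/-- The Frobenius lift `φ` attached to a δ-structure. -/
def frobeniusLift (y : A) : A := y ^ p + (p : A) * DA.δ y

/-- The difference quotient `(δ(x + α * d) - δ(x)) / α`, for `δ(α) = α * β`, written without
division by `α`. At `d = ∂(x)` it is the right-hand side of the δ-compatibility condition. -/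
def diffQuot (α β x d : A) : A :=
  (α ^ (p - 1) + (p : A) * β) * DA.δ d + β * d ^ p - crossTerm p α x d

theorem delta_add_mul (hp : p ≠ 0) {α β : A} (hαβ : DA.δ α = α * β) (x d : A) :
    DA.δ (x + α * d) = DA.δ x + α * DA.diffQuot α β x d := by
  rw [DA.delta_add, DA.delta_mul, sum_choose_div_mul_pow_eq_mul_crossTerm, hαβ,
    ← mul_pow_sub_one hp α, diffQuot]
  ring

end DeltaStructure

namespace AlphaDerivation

variable {p : ℕ} {R A : Type*} [CommRing R] [CommRing A] [Algebra R A] {α : A}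
  (D : AlphaDerivation R A α) (DA : DeltaStructure p A)

/-- The twist `γ = id + α·∂` of an `α`-derivation `∂`. -/
def twist (y : A) : A := y + α * D.toFun y

/-- The difference of the two sides of the δ-compatibility condition at `x`. -/
def deltaDefect (β x : A) : A := D.toFun (DA.δ x) - DA.diffQuot α β x (D.toFun x)

theorem deltaCompatAt_iff_deltaDefect_eq_zero (β x : A) :
    DeltaCompatAt p DA α β D.toFun x ↔ D.deltaDefect DA β x = 0 :=
  sub_eq_zero.symm

theorem map_natCast_mul (n : ℕ) (x : A) : D.toFun ((n : A) * x) = (n : A) * D.toFun x := by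
  simpa [Algebra.smul_def] using D.map_smul' (n : R) x

theorem map_pow (x : A) (n : ℕ) : D.toFun (x ^ n) = powDiffQuot n α x (D.toFun x) := by
  induction n with
  | zero => simp [powDiffQuot, D.map_one']
  | succ n ih =>
    rw [pow_succ, D.leibniz', ih, powDiffQuot_succ]
    ring

theorem twist_delta_sub_delta_twist (hp : p ≠ 0) {β : A} (hαβ : DA.δ α = α * β) (x : A) :
    D.twist (DA.δ x) - DA.δ (D.twist x) = α * D.deltaDefect DA β x := by
  rw [twist, twist, DA.delta_add_mul hp hαβ, deltaDefect]
  ring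

theorem map_frobeniusLift_sub (hp : p.Prime) (β x : A) :
    D.toFun (DA.frobeniusLift x) - (α ^ (p - 1) + (p : A) * β) * DA.frobeniusLift (D.toFun x) =
      (p : A) * D.deltaDefect DA β x := by
  simp only [DeltaStructure.frobeniusLift, deltaDefect, DeltaStructure.diffQuot]
  rw [D.map_add', D.map_natCast_mul, D.map_pow, powDiffQuot_prime hp]
  ring

end AlphaDerivation

theorem deltaCompat_iff_general {p : ℕ} (hp : p.Prime) {R A : Type*} [CommRing R] [CommRing A]
    [Algebra R A] (DA : DeltaStructure p A) {α β : A} (hαβ : DA.δ α = α * β)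
    (D : AlphaDerivation R A α) (x : A) :
    (DeltaCompatAt p DA α β D.toFun x → D.twist (DA.δ x) = DA.δ (D.twist x)) ∧
    ((∀ y : A, α * y = 0 → y = 0) →
      D.twist (DA.δ x) = DA.δ (D.twist x) → DeltaCompatAt p DA α β D.toFun x) ∧
    (DeltaCompatAt p DA α β D.toFun x →
      D.toFun (DA.frobeniusLift x) =
        (α ^ (p - 1) + (p : A) * β) * DA.frobeniusLift (D.toFun x)) ∧
    ((∀ y : A, (p : A) * y = 0 → y = 0) →
      D.toFun (DA.frobeniusLift x) =
        (α ^ (p - 1) + (p : A) * β) * DA.frobeniusLift (D.toFun x) →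
      DeltaCompatAt p DA α β D.toFun x) := by
  rw [D.deltaCompatAt_iff_deltaDefect_eq_zero, ← sub_eq_zero (a := D.twist (DA.δ x)),
    ← sub_eq_zero (a := D.toFun (DA.frobeniusLift x)),
    D.twist_delta_sub_delta_twist DA hp.ne_zero hαβ, D.map_frobeniusLift_sub DA hp]
  exact ⟨mul_eq_zero_of_right α, fun hα => hα _, mul_eq_zero_of_right (p : A), fun hpA => hpA _⟩

/-- With `γ = id + α·∂` and `φ(y) = y^p + p·δ(y)`:
(1) δ-compatibility of `x` implies `γ(δ(x)) = δ(γ(x))`, with converse when `α` is a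
nonzerodivisor; (2) δ-compatibility of `x` implies
`∂(φ(x)) = (α^{p−1} + pβ)·φ(∂(x))`, with converse when `A` is `p`-torsion free. -/
theorem deltaCompat_iff (p : ℕ) (hp : p.Prime) (R A : Type*) [CommRing R] [CommRing A]
    [Algebra R A] (DR : DeltaStructure p R) (DA : DeltaStructure p A)
    (halg : ∀ r : R, DA.δ (algebraMap R A r) = algebraMap R A (DR.δ r))
    (α β : A) (hαβ : DA.δ α = α * β)
    (D : AlphaDerivation R A α) (x : A) :
    (DeltaCompatAt p DA α β D.toFun x →
      DA.δ x + α * D.toFun (DA.δ x) = DA.δ (x + α * D.toFun x)) ∧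
    ((∀ y : A, α * y = 0 → y = 0) →
      DA.δ x + α * D.toFun (DA.δ x) = DA.δ (x + α * D.toFun x) →
      DeltaCompatAt p DA α β D.toFun x) ∧
    (DeltaCompatAt p DA α β D.toFun x →
      D.toFun (x ^ p + (p : A) * DA.δ x) =
        (α ^ (p - 1) + (p : A) * β) * ((D.toFun x) ^ p + (p : A) * DA.δ (D.toFun x))) ∧
    ((∀ y : A, (p : A) * y = 0 → y = 0) →
      D.toFun (x ^ p + (p : A) * DA.δ x) =
        (α ^ (p - 1) + (p : A) * β) * ((D.toFun x) ^ p + (p : A) * DA.δ (D.toFun x)) →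
      DeltaCompatAt p DA α β D.toFun x) :=
  deltaCompat_iff_general hp DA hαβ D x
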